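/- arXiv:1507.06558 — 2 statements merged into one kernel-verified Lean document; each statement's English description precedes it below -/
import Mathlib

section
/- Let B = B_R(x₀) be a closed ball in ℍ, let u be a smooth map from an open neighborhood of B into W that is triholomorphic at every point of B (du_x(y) = I(du_x(i·y)) + J(du_x(j·y)) + K(du_x(k·y)) for all y ∈ ℍ), and let v be any smooth map from a neighborhood of B into W that coincides with u on B ∖ K for some compact set K contained in the open ball. Then ∫_B ‖du_x‖² dx ≤ ∫_B ‖dv_x‖² dx, where ‖dL‖² denotes the squared Hilbert–Schmidt norm Σ_{q∈{1,i,j,k}} ‖dL(q)‖². (Flat case of the statement that smooth triholomorphic maps minimize the Dirichlet energy among competitors with the same boundary data, via the null-Lagrangian property of the Kähler-form energy.) -/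
/-!
The target `W` is flat, so the Dirichlet energy is a convex functional and it suffices that `u` is a
critical point. Indeed a triholomorphic map is harmonic: at `y = 1` the equation reads
`(∂₁ - I ∂ᵢ - J ∂ⱼ - K ∂ₖ) u = 0`, and applying `∂₁ + I ∂ᵢ + J ∂ⱼ + K ∂ₖ` gives the Laplacian,
the mixed terms cancelling since `I, J, K` anticommute and second derivatives are symmetric
(`laplacian_eq_zero`). With `w = v - u`, which vanishes near the boundary sphere,
`|dv|² = |du|² + 2 ⟨du, dw⟩ + |dw|² ≥ |du|² + 2 ⟨du, dw⟩`, and by harmonicity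
`⟨du, dw⟩ = ∑ q, ∂_q ⟨∂_q u, w⟩` is a divergence of compactly supported functions, so its integral
over the ball vanishes (`integral_fderiv_ball_eq_zero`).
-/

open scoped Quaternion RealInnerProductSpace

noncomputable instance : MeasurableSpace ℍ[ℝ] := borel _
instance : BorelSpace ℍ[ℝ] := ⟨rfl⟩

/-- The quaternion unit `i`. -/
noncomputable def Quat.i : ℍ[ℝ] := ⟨0, 1, 0, 0⟩
/-- The quaternion unit `j`. -/
noncomputable def Quat.j : ℍ[ℝ] := ⟨0, 0, 1, 0⟩
/-- The quaternion unit `k`. -/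
noncomputable def Quat.k : ℍ[ℝ] := ⟨0, 0, 0, 1⟩

/-- The integral over a ball of a directional derivative vanishes if the function vanishes off a
compact subset of the ball: its extension by zero is globally `C¹` with compact support. -/
theorem integral_fderiv_ball_eq_zero (x₀ : ℍ[ℝ]) (R : ℝ) (g : ℍ[ℝ] → ℝ) (q : ℍ[ℝ])
    (hg : ContDiffOn ℝ 1 g (Metric.ball x₀ R))
    (Kc : Set ℍ[ℝ]) (hKc : IsCompact Kc) (hKball : Kc ⊆ Metric.ball x₀ R)
    (hzero : ∀ x ∈ Metric.ball x₀ R \ Kc, g x = 0) :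
    ∫ x in Metric.ball x₀ R, fderiv ℝ g x q = 0 := by
  classical
  set G : ℍ[ℝ] → ℝ := (Metric.ball x₀ R).indicator g with hG
  have hin : ∀ x ∈ Metric.ball x₀ R, G =ᶠ[nhds x] g := fun x hx => by
    filter_upwards [Metric.isOpen_ball.mem_nhds hx] with y hy
    exact Set.indicator_of_mem hy g
  have hG0 : ∀ x ∉ Kc, G x = 0 := fun x hx => by
    by_cases hb : x ∈ Metric.ball x₀ R
    · rw [hG, Set.indicator_of_mem hb]; exact hzero x ⟨hb, hx⟩
    · exact Set.indicator_of_notMem hb g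
  have hout : ∀ x ∉ Kc, G =ᶠ[nhds x] fun _ => 0 := fun x hx => by
    filter_upwards [hKc.isClosed.isOpen_compl.mem_nhds hx] with y hy
    exact hG0 y hy
  have hGs : ContDiff ℝ 1 G := by
    rw [contDiff_iff_contDiffAt]
    intro x
    by_cases hb : x ∈ Metric.ball x₀ R
    · exact (hg.contDiffAt (Metric.isOpen_ball.mem_nhds hb)).congr_of_eventuallyEq (hin x hb)
    · exact contDiffAt_const.congr_of_eventuallyEq (hout x fun h => hb (hKball h))
  have hcs : HasCompactSupport G := HasCompactSupport.intro hKc hG0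
  have hGi : MeasureTheory.Integrable G := hGs.continuous.integrable_of_hasCompactSupport hcs
  have hGi' : MeasureTheory.Integrable (fun x => fderiv ℝ G x q) :=
    ((hGs.continuous_fderiv one_ne_zero).clm_apply continuous_const).integrable_of_hasCompactSupport
      (hcs.fderiv_apply ℝ q)
  have hint : ∫ x, fderiv ℝ G x q = 0 := by
    -- Integration by parts against the constant function `1`.
    have h := integral_bilinear_hasLineDerivAt_right_eq_neg_left_of_integrable
      (μ := (MeasureTheory.volume : MeasureTheory.Measure ℍ[ℝ])) (f := fun _ => (1 : ℝ))
      (f' := fun _ => (0 : ℝ)) (g := G) (g' := fun x => fderiv ℝ G x q) (v := q)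
      (B := ContinuousLinearMap.mul ℝ ℝ)
      (by simp) (by simpa using hGi') (by simpa using hGi)
      (fun x _ => (hasFDerivAt_const (1 : ℝ) x).hasLineDerivAt q)
      (fun x _ => ((hGs.differentiable one_ne_zero) x).hasFDerivAt.hasLineDerivAt q)
    simpa using h
  rw [← hint, ← MeasureTheory.setIntegral_eq_integral_of_forall_compl_eq_zero
    (s := Metric.ball x₀ R) (f := fun x => fderiv ℝ G x q)]
  · refine MeasureTheory.setIntegral_congr_fun measurableSet_ball fun x hx => ?_
    simp only [(hin x hx).fderiv_eq]
  · intro x hx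
    rw [(hout x fun h => hx (hKball h)).fderiv_eq]
    simp

/-- A map satisfying the triholomorphic (Fueter) equation near `x` is harmonic at `x`. -/
theorem laplacian_eq_zero {W : Type*} [NormedAddCommGroup W] [InnerProductSpace ℝ W]
    [FiniteDimensional ℝ W]
    (I J K : W →ₗ[ℝ] W)
    (hII : I ∘ₗ I = -LinearMap.id) (hJJ : J ∘ₗ J = -LinearMap.id)
    (hKK : K ∘ₗ K = -LinearMap.id)
    (hIJ : I ∘ₗ J = K) (hJK : J ∘ₗ K = I) (hKI : K ∘ₗ I = J)
    (u : ℍ[ℝ] → W) (x : ℍ[ℝ]) (hu : ContDiffAt ℝ 2 u x)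
    (htri : ∀ᶠ z in nhds x, fderiv ℝ u z 1
        = I (fderiv ℝ u z Quat.i) + J (fderiv ℝ u z Quat.j) + K (fderiv ℝ u z Quat.k)) :
    fderiv ℝ (fderiv ℝ u) x 1 1 + fderiv ℝ (fderiv ℝ u) x Quat.i Quat.i
      + fderiv ℝ (fderiv ℝ u) x Quat.j Quat.j + fderiv ℝ (fderiv ℝ u) x Quat.k Quat.k = 0 := by
  have hd : HasFDerivAt (fderiv ℝ u) (fderiv ℝ (fderiv ℝ u) x) x :=
    ((hu.fderiv_right (m := 1) (by norm_num)).differentiableAt one_ne_zero).hasFDerivAt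
  have hsymm : IsSymmSndFDerivAt ℝ u x := hu.isSymmSndFDerivAt (by simp)
  have hs : ∀ a b, fderiv ℝ (fderiv ℝ u) x a b = fderiv ℝ (fderiv ℝ u) x b a :=
    fun a b => hsymm a b
  set D := fderiv ℝ (fderiv ℝ u) x with hD
  have hdq : ∀ q, HasFDerivAt (fun z => fderiv ℝ u z q) (D.flip q) x := fun q => by
    have := hd.clm_apply (hasFDerivAt_const q x)
    simpa using this
  have hcomp : ∀ (S : W →ₗ[ℝ] W) (q : ℍ[ℝ]), HasFDerivAt (fun z => S (fderiv ℝ u z q))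
      ((LinearMap.toContinuousLinearMap S).comp (D.flip q)) x := fun S q =>
    (LinearMap.toContinuousLinearMap S).hasFDerivAt.comp x (hdq q)
  have hsum := ((hcomp I Quat.i).add (hcomp J Quat.j)).add (hcomp K Quat.k)
  have heq := (hsum.congr_of_eventuallyEq htri).unique (hdq 1)
  -- The Fueter equation differentiated in the direction `z`.
  have key : ∀ z, I (D z Quat.i) + J (D z Quat.j) + K (D z Quat.k) = D z 1 := fun z => by
    simpa using DFunLike.congr_fun heq z
  have II : ∀ a, I (I a) = -a := fun a => by simpa using LinearMap.congr_fun hII a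
  have JJ : ∀ a, J (J a) = -a := fun a => by simpa using LinearMap.congr_fun hJJ a
  have KK : ∀ a, K (K a) = -a := fun a => by simpa using LinearMap.congr_fun hKK a
  have IJ : ∀ a, I (J a) = K a := fun a => by simpa using LinearMap.congr_fun hIJ a
  have JK : ∀ a, J (K a) = I a := fun a => by simpa using LinearMap.congr_fun hJK a
  have KI : ∀ a, K (I a) = J a := fun a => by simpa using LinearMap.congr_fun hKI a
  have JI : ∀ a, J (I a) = -K a := fun a => by rw [← JK a, JJ]
  have KJ : ∀ a, K (J a) = -I a := fun a => by rw [← KI a, KK]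
  have IK : ∀ a, I (K a) = -J a := fun a => by rw [← IJ a, II]
  rw [← key 1, hs 1 Quat.i, hs 1 Quat.j, hs 1 Quat.k, ← key Quat.i, ← key Quat.j, ← key Quat.k,
    hs Quat.j Quat.i, hs Quat.k Quat.i, hs Quat.k Quat.j]
  simp only [map_add, II, JJ, KK, IJ, JK, KI, JI, KJ, IK]
  abel

/-- a smooth triholomorphic map on (a neighborhood of) a closed ball
`B = B̄_R(x₀) ⊆ ℍ` minimizes the Dirichlet energy among smooth competitors agreeing with it
outside a compact subset of the open ball. -/
theorem stmt9 {W : Type*} [NormedAddCommGroup W] [InnerProductSpace ℝ W]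
    [FiniteDimensional ℝ W]
    (I J K : W →ₗ[ℝ] W)
    (hIinner : ∀ v w : W, ⟪I v, I w⟫ = ⟪v, w⟫)
    (hJinner : ∀ v w : W, ⟪J v, J w⟫ = ⟪v, w⟫)
    (hKinner : ∀ v w : W, ⟪K v, K w⟫ = ⟪v, w⟫)
    (hII : I ∘ₗ I = -LinearMap.id) (hJJ : J ∘ₗ J = -LinearMap.id)
    (hKK : K ∘ₗ K = -LinearMap.id)
    (hIJ : I ∘ₗ J = K) (hJK : J ∘ₗ K = I) (hKI : K ∘ₗ I = J)
    (x₀ : ℍ[ℝ]) (R : ℝ) (hR : 0 < R)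
    (u v : ℍ[ℝ] → W)
    (O O' : Set ℍ[ℝ]) (hO : IsOpen O) (hO' : IsOpen O')
    (hBO : Metric.closedBall x₀ R ⊆ O) (hBO' : Metric.closedBall x₀ R ⊆ O')
    (hu : ContDiffOn ℝ (⊤ : ℕ∞) u O) (hv : ContDiffOn ℝ (⊤ : ℕ∞) v O')
    (htri : ∀ x ∈ Metric.closedBall x₀ R, ∀ y : ℍ[ℝ],
      fderiv ℝ u x y
        = I (fderiv ℝ u x (Quat.i * y)) + J (fderiv ℝ u x (Quat.j * y))
          + K (fderiv ℝ u x (Quat.k * y)))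
    (Kc : Set ℍ[ℝ]) (hKc : IsCompact Kc) (hKball : Kc ⊆ Metric.ball x₀ R)
    (hagree : ∀ x ∈ Metric.closedBall x₀ R \ Kc, u x = v x) :
    (∫ x in Metric.closedBall x₀ R,
        (‖fderiv ℝ u x 1‖ ^ 2 + ‖fderiv ℝ u x Quat.i‖ ^ 2
          + ‖fderiv ℝ u x Quat.j‖ ^ 2 + ‖fderiv ℝ u x Quat.k‖ ^ 2))
      ≤ ∫ x in Metric.closedBall x₀ R,
          (‖fderiv ℝ v x 1‖ ^ 2 + ‖fderiv ℝ v x Quat.i‖ ^ 2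
            + ‖fderiv ℝ v x Quat.j‖ ^ 2 + ‖fderiv ℝ v x Quat.k‖ ^ 2) := by
  have hball : Metric.ball x₀ R ⊆ Metric.closedBall x₀ R := Metric.ball_subset_closedBall
  have hUo : IsOpen (O ∩ O') := hO.inter hO'
  have hBU : Metric.closedBall x₀ R ⊆ O ∩ O' := Set.subset_inter hBO hBO'
  have htop : (2 : WithTop ℕ∞) ≤ ((⊤ : ℕ∞) : WithTop ℕ∞) :=
    WithTop.coe_le_coe.2 (le_top : (2 : ℕ∞) ≤ ⊤)
  have hduO : ContDiffOn ℝ 1 (fderiv ℝ u) O := hu.fderiv_of_isOpen hO (by rwa [one_add_one_eq_two])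
  have hdvO : ContDiffOn ℝ 1 (fderiv ℝ v) O' := hv.fderiv_of_isOpen hO' (by rwa [one_add_one_eq_two])
  have hu1 : ContDiffOn ℝ 1 u O := hu.of_le (by exact_mod_cast le_top)
  have hv1 : ContDiffOn ℝ 1 v O' := hv.of_le (by exact_mod_cast le_top)
  set g : ℍ[ℝ] → ℍ[ℝ] → ℝ := fun q x => ⟪fderiv ℝ u x q, v x - u x⟫ with hgdef
  have hg : ∀ q, ContDiffOn ℝ 1 (g q) (O ∩ O') := fun q =>
    ((hduO.mono Set.inter_subset_left).clm_apply contDiffOn_const).inner ℝ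
      ((hv1.mono Set.inter_subset_right).sub (hu1.mono Set.inter_subset_left))
  have hg0 : ∀ q, ∫ x in Metric.ball x₀ R, fderiv ℝ (g q) x q = 0 := fun q =>
    integral_fderiv_ball_eq_zero x₀ R (g q) q ((hg q).mono (hball.trans hBU)) Kc hKc hKball
      fun x hx => by simp [hgdef, hagree x ⟨hball hx.1, hx.2⟩]
  have hint : ∀ f : ℍ[ℝ] → ℝ, ContinuousOn f (Metric.closedBall x₀ R) →
      MeasureTheory.IntegrableOn f (Metric.ball x₀ R) := fun f hf =>
    (hf.integrableOn_compact (isCompact_closedBall x₀ R)).mono_set hball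
  have hgi : ∀ q, MeasureTheory.IntegrableOn (fun x => fderiv ℝ (g q) x q) (Metric.ball x₀ R) :=
    fun q => hint _ ((((hg q).continuousOn_fderiv_of_isOpen hUo le_rfl).mono hBU).clm_apply
      continuousOn_const)
  have hui : ∀ q, ContinuousOn (fun x => ‖fderiv ℝ u x q‖ ^ 2) (Metric.closedBall x₀ R) :=
    fun q => (((hduO.continuousOn.mono hBO).clm_apply continuousOn_const).norm).pow 2
  have hvi : ∀ q, ContinuousOn (fun x => ‖fderiv ℝ v x q‖ ^ 2) (Metric.closedBall x₀ R) :=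
    fun q => (((hdvO.continuousOn.mono hBO').clm_apply continuousOn_const).norm).pow 2
  have heu := hint _ ((((hui 1).add (hui Quat.i)).add (hui Quat.j)).add (hui Quat.k))
  have hev := hint _ ((((hvi 1).add (hvi Quat.i)).add (hvi Quat.j)).add (hvi Quat.k))
  have hdiv := (((hgi 1).add (hgi Quat.i)).add (hgi Quat.j)).add (hgi Quat.k)
  have hdiv0 : ∫ x in Metric.ball x₀ R, (fderiv ℝ (g 1) x 1 + fderiv ℝ (g Quat.i) x Quat.i
      + fderiv ℝ (g Quat.j) x Quat.j + fderiv ℝ (g Quat.k) x Quat.k) = 0 := by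
    refine (MeasureTheory.integral_add (((hgi 1).add (hgi Quat.i)).add (hgi Quat.j))
      (hgi Quat.k)).trans ?_
    rw [hg0, add_zero]
    refine (MeasureTheory.integral_add ((hgi 1).add (hgi Quat.i)) (hgi Quat.j)).trans ?_
    rw [hg0, add_zero]
    refine (MeasureTheory.integral_add (hgi 1) (hgi Quat.i)).trans ?_
    rw [hg0, hg0, add_zero]
  -- The boundary sphere is a null set.
  have hae : Metric.closedBall x₀ R =ᵐ[MeasureTheory.volume] Metric.ball x₀ R := by
    have hs : Metric.closedBall x₀ R = Metric.ball x₀ R ∪ Metric.sphere x₀ R :=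
      Metric.ball_union_sphere.symm
    rw [hs]
    exact MeasureTheory.union_ae_eq_left_of_ae_eq_empty
      (MeasureTheory.ae_eq_empty.2 (MeasureTheory.Measure.addHaar_sphere _ x₀ R))
  rw [MeasureTheory.setIntegral_congr_set hae, MeasureTheory.setIntegral_congr_set hae]
  have hsplit := MeasureTheory.integral_add heu (hdiv.const_mul 2)
  rw [MeasureTheory.integral_const_mul] at hsplit
  simp only [Pi.add_apply] at hsplit
  rw [hdiv0, mul_zero, add_zero] at hsplit
  rw [← hsplit]
  refine MeasureTheory.setIntegral_mono_on (heu.add (hdiv.const_mul 2)) hev measurableSet_ball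
    fun x hx => ?_
  have hxO := hO.mem_nhds (hBO (hball hx))
  have hxO' := hO'.mem_nhds (hBO' (hball hx))
  have hlap := laplacian_eq_zero I J K hII hJJ hKK hIJ hJK hKI u x
    ((hu.contDiffAt hxO).of_le htop) (by
      filter_upwards [Metric.isOpen_ball.mem_nhds hx] with z hz
      simpa using htri z (hball hz) 1)
  have hd2 := ((hduO.contDiffAt hxO).differentiableAt one_ne_zero).hasFDerivAt
  have hdu := ((hu1.contDiffAt hxO).differentiableAt one_ne_zero).hasFDerivAt
  have hdv := ((hv1.contDiffAt hxO').differentiableAt one_ne_zero).hasFDerivAt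
  have hgq : ∀ q, fderiv ℝ (g q) x q = ⟪fderiv ℝ u x q, fderiv ℝ v x q - fderiv ℝ u x q⟫
      + ⟪fderiv ℝ (fderiv ℝ u) x q q, v x - u x⟫ := fun q => by
    have h := ((hd2.clm_apply (hasFDerivAt_const q x)).inner ℝ (hdv.sub hdu)).fderiv
    have happ := DFunLike.congr_fun h q
    simpa using happ
  -- Convexity of the squared norm, in one direction `q`.
  have hconv : ∀ q, ‖fderiv ℝ u x q‖ ^ 2
      + 2 * ⟪fderiv ℝ u x q, fderiv ℝ v x q - fderiv ℝ u x q⟫ ≤ ‖fderiv ℝ v x q‖ ^ 2 := fun q => by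
    have h := norm_add_sq_real (fderiv ℝ u x q) (fderiv ℝ v x q - fderiv ℝ u x q)
    rw [add_sub_cancel] at h
    nlinarith [sq_nonneg ‖fderiv ℝ v x q - fderiv ℝ u x q‖]
  have hlap' := congrArg (fun a => ⟪a, v x - u x⟫) hlap
  simp only [inner_add_left, inner_zero_left] at hlap'
  simp only [hgq]
  linarith [hconv 1, hconv Quat.i, hconv Quat.j, hconv Quat.k]
end

section
/- Let v : B₁(0) ⊆ ℝⁿ → ℝ^Q be a C² map each of whose components is harmonic (Δ v^α = 0 on B₁(0)). Then for every τ ∈ (0, 1/2], τ^{2−n} ∫_{B_τ(0)} ‖dv_x‖² dx ≤ 2ⁿ τ² ∫_{B₁(0)} ‖dv_x‖² dx, where ‖dv_x‖² := Σ_{ℓ=1}^{n} ‖dv_x(e_ℓ)‖² for the standard basis (e_ℓ). (The decay estimate for the harmonic blow-up limit used in the ε-regularity lemma, obtained from subharmonicity of ‖dv‖² via Bochner's formula.) -/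
/-!
The gradient of a harmonic map is componentwise harmonic, so by the mean value property and
Cauchy–Schwarz the energy density `G = ‖dv‖²` is bounded at each `x ∈ B_{1/2}` by its average over
`B_{1/2}(x) ⊆ B₁`: `|B₁| G(x) ≤ 2ⁿ ∫_{B₁} G` (`energy_density_le`). Integrating this over `B_τ`,
whose volume is `τⁿ |B₁|`, gives the decay estimate.

Since `v` is only `C²`, its derivatives are not known to be `C²`; the mean value property is
therefore proved for a component `U` of `v` itself and then differentiated in the centre of the
ball. To avoid surface integrals it is proved with a continuous radial weight `w(|y|²)` supported
in the closed unit ball: the derivative in `t` of `∫ w(|y|²) U(x + t y) dy` is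
`∫ w(|y|²) y · ∇U(x + t y) dy`, and `w(|y|²) y` is the gradient of `W(|y|²)`, where `W' = w / 2` and
`W = 0` on `[1, ∞)`, so integration by parts produces `-t ∫ W(|y|²) ΔU(x + t y) dy = 0`
(`integral_radial_eq_zero`). Letting `w` increase to the indicator of `[0, 1)` turns the weighted
inequality into one for balls (`ball_sq_mean_value`). A cutoff function reduces everything to maps
that are `C²` on all of `ℝⁿ` and harmonic on a ball of radius slightly less than `1`.
-/

open MeasureTheory
open scoped ENNReal

/-! ### Weighted mean value property -/

/-- Differentiation under the integral sign along lines `t ↦ a y + t • b y`; it serves both to vary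
the radius (`a y = x`, `b y = y`) and to vary the centre (`a y = x + r • y`, `b` constant). -/
theorem hasDerivAt_integral_weight {n : ℕ} {k U : EuclideanSpace ℝ (Fin n) → ℝ}
    (hk : Continuous k) (hkc : HasCompactSupport k) (hU : ContDiff ℝ 1 U)
    {a b : EuclideanSpace ℝ (Fin n) → EuclideanSpace ℝ (Fin n)}
    (ha : Continuous a) (hb : Continuous b) (t₀ : ℝ) :
    HasDerivAt (fun t : ℝ => ∫ y, k y * U (a y + t • b y))
      (∫ y, k y * fderiv ℝ U (a y + t₀ • b y) (b y)) t₀ := by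
  have hU' : Continuous (fderiv ℝ U) := hU.continuous_fderiv one_ne_zero
  have hUc : Continuous U := hU.continuous
  have hcont : Continuous (fun p : ℝ × EuclideanSpace ℝ (Fin n) =>
      k p.2 * fderiv ℝ U (a p.2 + p.1 • b p.2) (b p.2)) := by fun_prop
  obtain ⟨C, hC⟩ := ((isCompact_Icc (a := t₀ - 1) (b := t₀ + 1)).prod
    hkc.isCompact).exists_bound_of_continuousOn hcont.continuousOn
  refine (hasDerivAt_integral_of_dominated_loc_of_deriv_le
    (F := fun t y => k y * U (a y + t • b y))
    (F' := fun t y => k y * fderiv ℝ U (a y + t • b y) (b y))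
    (s := Set.Icc (t₀ - 1) (t₀ + 1)) (bound := (tsupport k).indicator fun _ => C)
    (Icc_mem_nhds (by linarith) (by linarith)) ?_ ?_ ?_ ?_ ?_ ?_).2
  · refine Filter.Eventually.of_forall fun t => Continuous.aestronglyMeasurable ?_
    fun_prop
  · refine Continuous.integrable_of_hasCompactSupport ?_ hkc.mul_right
    fun_prop
  · refine Continuous.aestronglyMeasurable ?_
    fun_prop
  · refine Filter.Eventually.of_forall fun y t ht => ?_
    by_cases hy : y ∈ tsupport k
    · rw [Set.indicator_of_mem hy]
      exact hC (t, y) ⟨ht, hy⟩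
    · simp [Set.indicator_of_notMem hy, image_eq_zero_of_notMem_tsupport hy]
  · rw [integrable_indicator_iff (isClosed_tsupport k).measurableSet]
    exact integrableOn_const hkc.isCompact.measure_lt_top.ne
  · refine Filter.Eventually.of_forall fun y t _ => ?_
    have h1 : HasDerivAt (fun t : ℝ => a y + t • b y) (b y) t := by
      simpa using ((hasDerivAt_id t).smul_const (b y)).const_add (a y)
    exact (((hU.differentiable one_ne_zero _).hasFDerivAt).comp_hasDerivAt t h1).const_mul _

theorem hasCompactSupport_radial {n : ℕ} {w : ℝ → ℝ} (hw0 : ∀ s, 1 ≤ s → w s = 0) :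
    HasCompactSupport (fun y : EuclideanSpace ℝ (Fin n) => w (‖y‖ ^ 2)) := by
  refine HasCompactSupport.intro (isCompact_closedBall (0 : EuclideanSpace ℝ (Fin n)) 1)
    fun y hy => hw0 _ ?_
  simp only [Metric.mem_closedBall, dist_zero_right, not_le] at hy
  nlinarith

/-- The radial derivative of a harmonic function has weighted mean zero: the field `w(|y|²) y` is the
gradient of a function vanishing outside the unit ball. -/
theorem integral_radial_eq_zero {n : ℕ} {U : EuclideanSpace ℝ (Fin n) → ℝ} (hU : ContDiff ℝ 2 U)
    {R : ℝ} (hharm : ∀ x ∈ Metric.ball (0 : EuclideanSpace ℝ (Fin n)) R,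
      (∑ l : Fin n, fderiv ℝ (fun z => fderiv ℝ U z (EuclideanSpace.single l (1 : ℝ))) x
          (EuclideanSpace.single l (1 : ℝ))) = 0)
    {w : ℝ → ℝ} (hw : Continuous w) (hw0 : ∀ s, 1 ≤ s → w s = 0)
    {x : EuclideanSpace ℝ (Fin n)} {t : ℝ} (ht : 0 ≤ t) (hxt : ‖x‖ + t < R) :
    ∫ y : EuclideanSpace ℝ (Fin n), w (‖y‖ ^ 2) * fderiv ℝ U (x + t • y) y = 0 := by
  set W : ℝ → ℝ := fun s => ∫ u in (1 : ℝ)..s, w u / 2 with hW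
  have hWd : ∀ s, HasDerivAt W (w s / 2) s := fun s =>
    intervalIntegral.integral_hasDerivAt_right
      ((hw.div_const 2).intervalIntegrable _ _)
      ((hw.div_const 2).stronglyMeasurableAtFilter _ _) (hw.div_const 2).continuousAt
  have hWc : Continuous W := continuous_iff_continuousAt.2 fun s => (hWd s).continuousAt
  have hW0 : ∀ s, 1 ≤ s → W s = 0 := fun s hs => by
    rw [hW]
    simp only
    rw [intervalIntegral.integral_congr (g := fun _ => (0 : ℝ))]
    · simp
    · intro u hu
      rw [Set.uIcc_of_le hs] at hu
      simp [hw0 u hu.1]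
  have hwk := hasCompactSupport_radial (n := n) hw0
  have hWk := hasCompactSupport_radial (n := n) hW0
  have hU1 : ContDiff ℝ 1 (fderiv ℝ U) := hU.fderiv_right (by norm_num)
  have hU1c : Continuous (fderiv ℝ U) := hU1.continuous
  let e : Fin n → EuclideanSpace ℝ (Fin n) := fun l => EuclideanSpace.single l (1 : ℝ)
  have hD : ∀ l, ContDiff ℝ 1 (fun z => fderiv ℝ U z (e l)) := fun l =>
    hU1.clm_apply contDiff_const
  have hDc : ∀ l, Continuous (fun z => fderiv ℝ (fun z => fderiv ℝ U z (e l)) z) := fun l =>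
    (hD l).continuous_fderiv one_ne_zero
  have hsum : ∀ y : EuclideanSpace ℝ (Fin n), y = ∑ l, y l • e l := fun y => by
    ext i
    simp [e, Finset.sum_apply, Pi.single_apply]
  -- the radial field `w(|y|²) y` is the gradient of `W(|y|²)`
  have hparts : ∀ l, ∫ y : EuclideanSpace ℝ (Fin n),
      (w (‖y‖ ^ 2) * y l) * fderiv ℝ U (x + t • y) (e l) =
      - ∫ y, W (‖y‖ ^ 2) * (t * fderiv ℝ (fun z => fderiv ℝ U z (e l)) (x + t • y) (e l)) := by
    intro l
    have hWf : ∀ y : EuclideanSpace ℝ (Fin n), HasFDerivAt (fun y => W (‖y‖ ^ 2))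
        ((w (‖y‖ ^ 2) / 2) • (2 • innerSL ℝ y)) y := fun y =>
      (hWd _).comp_hasFDerivAt y (hasStrictFDerivAt_norm_sq y).hasFDerivAt
    have hHf : ∀ y : EuclideanSpace ℝ (Fin n),
        HasFDerivAt (fun y => fderiv ℝ U (x + t • y) (e l))
        (t • fderiv ℝ (fun z => fderiv ℝ U z (e l)) (x + t • y)) y := fun y => by
      have h1 : HasFDerivAt (fun y : EuclideanSpace ℝ (Fin n) => x + t • y)
          (t • ContinuousLinearMap.id ℝ _) y := ((hasFDerivAt_id y).const_smul t).const_add x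
      have := (((hD l).differentiable one_ne_zero (x + t • y)).hasFDerivAt).comp y h1
      have hEq : fderiv ℝ (fun z => fderiv ℝ U z (e l)) (x + t • y) ∘SL
          (t • ContinuousLinearMap.id ℝ (EuclideanSpace ℝ (Fin n))) =
          t • fderiv ℝ (fun z => fderiv ℝ U z (e l)) (x + t • y) := by
        ext z
        simp
      rw [← hEq]
      exact this
    have key := integral_bilinear_hasFDerivAt_right_eq_neg_left_of_integrable
      (μ := (volume : Measure (EuclideanSpace ℝ (Fin n))))
      (B := ContinuousLinearMap.mul ℝ ℝ) (v := e l)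
      (f := fun y : EuclideanSpace ℝ (Fin n) => W (‖y‖ ^ 2))
      (f' := fun y => (w (‖y‖ ^ 2) / 2) • (2 • innerSL ℝ y))
      (g := fun y => fderiv ℝ U (x + t • y) (e l))
      (g' := fun y => t • fderiv ℝ (fun z => fderiv ℝ U z (e l)) (x + t • y))
      ?_ ?_ ?_ (fun y _ => hWf y) (fun y _ => hHf y)
    · simp only [ContinuousLinearMap.mul_apply', smul_apply, smul_eq_mul,
        innerSL_apply_apply, nsmul_eq_mul] at key
      rw [key, neg_neg]
      congr 1
      ext y
      have hi : inner ℝ y (e l) = y l := by simp [e, EuclideanSpace.inner_single_right]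
      rw [hi]
      push_cast
      ring
    · refine Continuous.integrable_of_hasCompactSupport ?_ (hwk.mono ?_)
      · have hi : Continuous fun y : EuclideanSpace ℝ (Fin n) => inner ℝ y (e l) := by fun_prop
        simp only [ContinuousLinearMap.mul_apply', smul_apply, smul_eq_mul,
          innerSL_apply_apply, nsmul_eq_mul]
        fun_prop
      · intro y hy h0
        apply hy
        simp only at h0
        simp [h0]
    · refine Continuous.integrable_of_hasCompactSupport ?_ (hWk.mono ?_)
      · simp only [ContinuousLinearMap.mul_apply', smul_apply, smul_eq_mul]
        have := hDc l
        fun_prop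
      · intro y hy h0
        apply hy
        simp only at h0
        simp [h0]
    · refine Continuous.integrable_of_hasCompactSupport ?_ (hWk.mono ?_)
      · simp only [ContinuousLinearMap.mul_apply']
        fun_prop
      · intro y hy h0
        apply hy
        simp only at h0
        simp [h0]
  have hint1 : ∀ l ∈ Finset.univ, Integrable (fun y : EuclideanSpace ℝ (Fin n) =>
      (w (‖y‖ ^ 2) * y l) * fderiv ℝ U (x + t • y) (e l)) := fun l _ => by
    refine Continuous.integrable_of_hasCompactSupport (by fun_prop) ?_
    exact (hwk.mul_right).mul_right
  have hint2 : ∀ l ∈ Finset.univ, Integrable (fun y : EuclideanSpace ℝ (Fin n) =>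
      W (‖y‖ ^ 2) * (t * fderiv ℝ (fun z => fderiv ℝ U z (e l)) (x + t • y) (e l))) :=
    fun l _ => by
    have := hDc l
    refine Continuous.integrable_of_hasCompactSupport (by fun_prop) ?_
    exact hWk.mul_right
  calc ∫ y : EuclideanSpace ℝ (Fin n), w (‖y‖ ^ 2) * fderiv ℝ U (x + t • y) y
      = ∫ y : EuclideanSpace ℝ (Fin n),
        ∑ l, (w (‖y‖ ^ 2) * y l) * fderiv ℝ U (x + t • y) (e l) := by
        congr 1
        ext y
        conv_lhs => rw [show fderiv ℝ U (x + t • y) y = fderiv ℝ U (x + t • y) (∑ l, y l • e l)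
          from congrArg _ (hsum y)]
        simp [Finset.mul_sum, mul_assoc]
    _ = - ∫ y : EuclideanSpace ℝ (Fin n), ∑ l,
        W (‖y‖ ^ 2) * (t * fderiv ℝ (fun z => fderiv ℝ U z (e l)) (x + t • y) (e l)) := by
        rw [integral_finsetSum _ hint1, integral_finsetSum _ hint2, ← Finset.sum_neg_distrib]
        exact Finset.sum_congr rfl fun l _ => hparts l
    _ = 0 := by
        rw [neg_eq_zero]
        refine integral_eq_zero_of_ae (Filter.Eventually.of_forall fun y => ?_)
        simp only [← Finset.mul_sum, Pi.zero_apply]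
        rcases le_or_gt 1 ‖y‖ with hy | hy
        · rw [hW0 _ (by nlinarith)]
          simp
        · rw [hharm (x + t • y) ?_]
          · simp
          · rw [mem_ball_zero_iff]
            calc ‖x + t • y‖ ≤ ‖x‖ + t * ‖y‖ := by
                  refine (norm_add_le _ _).trans ?_
                  rw [norm_smul, Real.norm_of_nonneg ht]
              _ ≤ ‖x‖ + t := by nlinarith
              _ < R := hxt

theorem weighted_mean_value {n : ℕ} {U : EuclideanSpace ℝ (Fin n) → ℝ} (hU : ContDiff ℝ 2 U)
    {R : ℝ} (hharm : ∀ x ∈ Metric.ball (0 : EuclideanSpace ℝ (Fin n)) R,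
      (∑ l : Fin n, fderiv ℝ (fun z => fderiv ℝ U z (EuclideanSpace.single l (1 : ℝ))) x
          (EuclideanSpace.single l (1 : ℝ))) = 0)
    {w : ℝ → ℝ} (hw : Continuous w) (hw0 : ∀ s, 1 ≤ s → w s = 0)
    {x : EuclideanSpace ℝ (Fin n)} {r : ℝ} (hr : 0 ≤ r) (hxr : ‖x‖ + r < R) :
    ∫ y : EuclideanSpace ℝ (Fin n), w (‖y‖ ^ 2) * U (x + r • y) =
      (∫ y : EuclideanSpace ℝ (Fin n), w (‖y‖ ^ 2)) * U x := by
  have hd : ∀ t, HasDerivAt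
      (fun t : ℝ => ∫ y : EuclideanSpace ℝ (Fin n), w (‖y‖ ^ 2) * U (x + t • y))
      (∫ y : EuclideanSpace ℝ (Fin n), w (‖y‖ ^ 2) * fderiv ℝ U (x + t • y) y) t := fun t =>
    hasDerivAt_integral_weight (by fun_prop) (hasCompactSupport_radial hw0)
      (hU.of_le (by norm_num)) continuous_const continuous_id t
  have := constant_of_has_deriv_right_zero (a := 0) (b := r)
    (fun t _ => (hd t).continuousAt.continuousWithinAt) (fun t ht => by
      have h := hd t
      rw [integral_radial_eq_zero hU hharm hw hw0 ht.1 (by linarith [ht.2])] at h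
      exact h.hasDerivWithinAt) r ⟨hr, le_rfl⟩
  rw [this]
  simp [integral_mul_const]

/-- Mean value property for the directional derivatives of a harmonic function that is only assumed
`C²`, obtained by differentiating the mean value property in the centre of the ball. -/
theorem weighted_mean_value_fderiv {n : ℕ} {U : EuclideanSpace ℝ (Fin n) → ℝ}
    (hU : ContDiff ℝ 2 U)
    {R : ℝ} (hharm : ∀ x ∈ Metric.ball (0 : EuclideanSpace ℝ (Fin n)) R,
      (∑ l : Fin n, fderiv ℝ (fun z => fderiv ℝ U z (EuclideanSpace.single l (1 : ℝ))) x
          (EuclideanSpace.single l (1 : ℝ))) = 0)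
    {w : ℝ → ℝ} (hw : Continuous w) (hw0 : ∀ s, 1 ≤ s → w s = 0)
    {x : EuclideanSpace ℝ (Fin n)} {r : ℝ} (hr : 0 ≤ r) (hxr : ‖x‖ + r < R)
    (e : EuclideanSpace ℝ (Fin n)) :
    ∫ y : EuclideanSpace ℝ (Fin n), w (‖y‖ ^ 2) * fderiv ℝ U (x + r • y) e =
      (∫ y : EuclideanSpace ℝ (Fin n), w (‖y‖ ^ 2)) * fderiv ℝ U x e := by
  have h1 := hasDerivAt_integral_weight (k := fun y : EuclideanSpace ℝ (Fin n) => w (‖y‖ ^ 2))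
    (by fun_prop) (hasCompactSupport_radial hw0) (hU.of_le (by norm_num : (1 : WithTop ℕ∞) ≤ 2))
    (a := fun y => x + r • y) (b := fun _ => e) (by fun_prop) continuous_const 0
  have h2 : HasDerivAt (fun t : ℝ => (∫ y : EuclideanSpace ℝ (Fin n), w (‖y‖ ^ 2)) * U (x + t • e))
      ((∫ y : EuclideanSpace ℝ (Fin n), w (‖y‖ ^ 2)) * fderiv ℝ U (x + (0 : ℝ) • e) e) 0 := by
    have h1 : HasDerivAt (fun t : ℝ => x + t • e) e 0 := by
      simpa using ((hasDerivAt_id (0 : ℝ)).smul_const e).const_add x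
    exact (((hU.differentiable two_ne_zero _).hasFDerivAt).comp_hasDerivAt 0 h1).const_mul _
  have hev : ∀ᶠ t : ℝ in nhds 0, ‖x + t • e‖ + r < R := by
    have hc : Continuous fun t : ℝ => ‖x + t • e‖ + r := by fun_prop
    exact hc.continuousAt.eventually_lt_const (by simpa using hxr)
  have h3 := h1.unique (h2.congr_of_eventuallyEq (hev.mono fun t ht => by
    simp only
    rw [← weighted_mean_value hU hharm hw hw0 hr ht]
    simp only [add_right_comm]))
  simpa using h3

/-- Squares of directional derivatives of a harmonic function are subharmonic, in mean value form. -/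
theorem weighted_sq_mean_value {n : ℕ} {U : EuclideanSpace ℝ (Fin n) → ℝ}
    (hU : ContDiff ℝ 2 U)
    {R : ℝ} (hharm : ∀ x ∈ Metric.ball (0 : EuclideanSpace ℝ (Fin n)) R,
      (∑ l : Fin n, fderiv ℝ (fun z => fderiv ℝ U z (EuclideanSpace.single l (1 : ℝ))) x
          (EuclideanSpace.single l (1 : ℝ))) = 0)
    {w : ℝ → ℝ} (hw : Continuous w) (hw0 : ∀ s, 1 ≤ s → w s = 0) (hwn : ∀ s, 0 ≤ w s)
    {x : EuclideanSpace ℝ (Fin n)} {r : ℝ} (hr : 0 ≤ r) (hxr : ‖x‖ + r < R)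
    (e : EuclideanSpace ℝ (Fin n)) :
    (∫ y : EuclideanSpace ℝ (Fin n), w (‖y‖ ^ 2)) * (fderiv ℝ U x e) ^ 2 ≤
      ∫ y : EuclideanSpace ℝ (Fin n), w (‖y‖ ^ 2) * (fderiv ℝ U (x + r • y) e) ^ 2 := by
  have hmv := weighted_mean_value_fderiv hU hharm hw hw0 hr hxr e
  have hk := hasCompactSupport_radial (n := n) hw0
  have hU' : Continuous (fderiv ℝ U) := hU.continuous_fderiv two_ne_zero
  set c := fderiv ℝ U x e
  have i0 : Integrable fun y : EuclideanSpace ℝ (Fin n) => w (‖y‖ ^ 2) :=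
    Continuous.integrable_of_hasCompactSupport (by fun_prop) hk
  have i1 : Integrable fun y : EuclideanSpace ℝ (Fin n) =>
      w (‖y‖ ^ 2) * fderiv ℝ U (x + r • y) e :=
    Continuous.integrable_of_hasCompactSupport (by fun_prop) hk.mul_right
  have i2 : Integrable fun y : EuclideanSpace ℝ (Fin n) =>
      w (‖y‖ ^ 2) * (fderiv ℝ U (x + r • y) e) ^ 2 :=
    Continuous.integrable_of_hasCompactSupport (by fun_prop) hk.mul_right
  -- Cauchy–Schwarz: integrate `w (h - c)² ≥ 0`, where `h` is the derivative and `c = h x`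
  have hpos : 0 ≤ ∫ y : EuclideanSpace ℝ (Fin n),
      ((w (‖y‖ ^ 2) * (fderiv ℝ U (x + r • y) e) ^ 2
        - 2 * c * (w (‖y‖ ^ 2) * fderiv ℝ U (x + r • y) e)) + c ^ 2 * w (‖y‖ ^ 2)) :=
    integral_nonneg fun y => by
      have := mul_nonneg (hwn (‖y‖ ^ 2)) (sq_nonneg (fderiv ℝ U (x + r • y) e - c))
      simp only [Pi.zero_apply]
      linarith
  have i3 : Integrable fun y : EuclideanSpace ℝ (Fin n) =>
      w (‖y‖ ^ 2) * (fderiv ℝ U (x + r • y) e) ^ 2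
        - 2 * c * (w (‖y‖ ^ 2) * fderiv ℝ U (x + r • y) e) := i2.sub (i1.const_mul _)
  rw [integral_add i3 (i0.const_mul _), integral_sub i2 (i1.const_mul _),
    integral_const_mul, integral_const_mul, hmv] at hpos
  linarith

/-! ### Mean value inequality on balls -/

/-- The continuous radial weights `max 0 (min 1 (k (1 - |y|²)))` converge to the indicator of the unit
ball. -/
theorem tendsto_integral_weight (n : ℕ) :
    Filter.Tendsto (fun k : ℕ => ∫ y : EuclideanSpace ℝ (Fin n),
      max 0 (min 1 ((k : ℝ) * (1 - ‖y‖ ^ 2)))) Filter.atTop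
      (nhds (volume.real (Metric.ball (0 : EuclideanSpace ℝ (Fin n)) 1))) := by
  have h1 : volume.real (Metric.ball (0 : EuclideanSpace ℝ (Fin n)) 1) =
      ∫ y, (Metric.ball (0 : EuclideanSpace ℝ (Fin n)) 1).indicator (fun _ => (1 : ℝ)) y := by
    rw [integral_indicator measurableSet_ball]
    simp
  rw [h1]
  refine tendsto_integral_of_dominated_convergence
    ((Metric.ball (0 : EuclideanSpace ℝ (Fin n)) 1).indicator (fun _ => (1 : ℝ)))
    (fun k => Continuous.aestronglyMeasurable (by fun_prop)) ?_ (fun k => ?_) ?_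
  · rw [integrable_indicator_iff measurableSet_ball]
    exact integrableOn_const measure_ball_lt_top.ne
  · refine Filter.Eventually.of_forall fun y => ?_
    rw [Real.norm_of_nonneg (le_max_left _ _)]
    by_cases hy : y ∈ Metric.ball (0 : EuclideanSpace ℝ (Fin n)) 1
    · simp [Set.indicator_of_mem hy]
    · rw [Set.indicator_of_notMem hy]
      rw [mem_ball_zero_iff, not_lt] at hy
      refine max_le le_rfl ((min_le_right _ _).trans ?_)
      exact mul_nonpos_of_nonneg_of_nonpos (Nat.cast_nonneg k) (by nlinarith)
  · refine Filter.Eventually.of_forall fun y => ?_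
    by_cases hy : y ∈ Metric.ball (0 : EuclideanSpace ℝ (Fin n)) 1
    · rw [Set.indicator_of_mem hy]
      rw [mem_ball_zero_iff] at hy
      have hpos : 0 < 1 - ‖y‖ ^ 2 := by nlinarith [norm_nonneg y]
      have ht := (tendsto_natCast_atTop_atTop (R := ℝ)).atTop_mul_const hpos
      refine tendsto_const_nhds.congr' ?_
      filter_upwards [ht.eventually_ge_atTop 1] with k hk
      rw [min_eq_left hk, max_eq_right zero_le_one]
    · rw [Set.indicator_of_notMem hy]
      rw [mem_ball_zero_iff, not_lt] at hy
      refine tendsto_const_nhds.congr fun k => ?_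
      have : (k : ℝ) * (1 - ‖y‖ ^ 2) ≤ 0 :=
        mul_nonpos_of_nonneg_of_nonpos (Nat.cast_nonneg k) (by nlinarith)
      exact (max_eq_left ((min_le_right _ _).trans this)).symm

theorem ball_sq_mean_value {n Q : ℕ} {U : Fin Q → EuclideanSpace ℝ (Fin n) → ℝ}
    (hU : ∀ α, ContDiff ℝ 2 (U α))
    {R : ℝ} (hharm : ∀ α, ∀ x ∈ Metric.ball (0 : EuclideanSpace ℝ (Fin n)) R,
      (∑ l : Fin n, fderiv ℝ (fun z => fderiv ℝ (U α) z (EuclideanSpace.single l (1 : ℝ))) x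
          (EuclideanSpace.single l (1 : ℝ))) = 0)
    {x : EuclideanSpace ℝ (Fin n)} {r : ℝ} (hr : 0 ≤ r) (hxr : ‖x‖ + r < R) :
    volume.real (Metric.ball (0 : EuclideanSpace ℝ (Fin n)) 1) *
      (∑ l : Fin n, ∑ α : Fin Q, (fderiv ℝ (U α) x (EuclideanSpace.single l (1 : ℝ))) ^ 2) ≤
      ∫ y in Metric.ball (0 : EuclideanSpace ℝ (Fin n)) 1,
        ∑ l : Fin n, ∑ α : Fin Q,
          (fderiv ℝ (U α) (x + r • y) (EuclideanSpace.single l (1 : ℝ))) ^ 2 := by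
  have hU' : ∀ α, Continuous (fderiv ℝ (U α)) := fun α => (hU α).continuous_fderiv two_ne_zero
  refine le_of_tendsto ((tendsto_integral_weight n).mul_const _)
    (Filter.Eventually.of_forall fun k => ?_)
  set w : ℝ → ℝ := fun s => max 0 (min 1 ((k : ℝ) * (1 - s))) with hwdef
  have hw : Continuous w := by fun_prop
  have hwn : ∀ s, 0 ≤ w s := fun s => le_max_left _ _
  have hw1 : ∀ s, w s ≤ 1 := fun s => max_le zero_le_one (min_le_left _ _)
  have hw0 : ∀ s, 1 ≤ s → w s = 0 := fun s hs => max_eq_left ((min_le_right _ _).trans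
    (mul_nonpos_of_nonneg_of_nonpos (Nat.cast_nonneg k) (by linarith)))
  have hk := hasCompactSupport_radial (n := n) hw0
  have h_int : ∀ l : Fin n, ∀ α : Fin Q, Integrable fun y : EuclideanSpace ℝ (Fin n) =>
      w (‖y‖ ^ 2) * (fderiv ℝ (U α) (x + r • y) (EuclideanSpace.single l (1 : ℝ))) ^ 2 :=
    fun l α => by
      have := hU' α
      exact Continuous.integrable_of_hasCompactSupport (by fun_prop) hk.mul_right
  calc (∫ y : EuclideanSpace ℝ (Fin n), w (‖y‖ ^ 2)) *
        (∑ l : Fin n, ∑ α : Fin Q, (fderiv ℝ (U α) x (EuclideanSpace.single l (1 : ℝ))) ^ 2)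
      ≤ ∑ l : Fin n, ∑ α : Fin Q, ∫ y : EuclideanSpace ℝ (Fin n), w (‖y‖ ^ 2) *
          (fderiv ℝ (U α) (x + r • y) (EuclideanSpace.single l (1 : ℝ))) ^ 2 := by
        simp only [Finset.mul_sum]
        exact Finset.sum_le_sum fun l _ => Finset.sum_le_sum fun α _ =>
          weighted_sq_mean_value (hU α) (hharm α) hw hw0 hwn hr hxr _
    _ = ∫ y : EuclideanSpace ℝ (Fin n), w (‖y‖ ^ 2) * ∑ l : Fin n, ∑ α : Fin Q,
          (fderiv ℝ (U α) (x + r • y) (EuclideanSpace.single l (1 : ℝ))) ^ 2 := by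
        simp only [Finset.mul_sum]
        rw [integral_finsetSum _ fun l _ => integrable_finsetSum _ fun α _ => h_int l α]
        exact Finset.sum_congr rfl fun l _ => (integral_finsetSum _ fun α _ => h_int l α).symm
    _ ≤ _ := by
        rw [← integral_indicator measurableSet_ball]
        refine integral_mono ?_ ?_ fun y => ?_
        · simp only [Finset.mul_sum]
          exact integrable_finsetSum _ fun l _ => integrable_finsetSum _ fun α _ => h_int l α
        · rw [integrable_indicator_iff measurableSet_ball]
          refine (ContinuousOn.integrableOn_compact
            (isCompact_closedBall (0 : EuclideanSpace ℝ (Fin n)) 1)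
            (Continuous.continuousOn ?_)).mono_set Metric.ball_subset_closedBall
          fun_prop
        · have hG : 0 ≤ ∑ l : Fin n, ∑ α : Fin Q,
              (fderiv ℝ (U α) (x + r • y) (EuclideanSpace.single l (1 : ℝ))) ^ 2 := by positivity
          by_cases hy : y ∈ Metric.ball (0 : EuclideanSpace ℝ (Fin n)) 1
          · rw [Set.indicator_of_mem hy]
            exact mul_le_of_le_one_left hG (hw1 _)
          · rw [Set.indicator_of_notMem hy]
            rw [mem_ball_zero_iff, not_lt] at hy
            simp only
            rw [hw0 _ (by nlinarith), zero_mul]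

theorem setIntegral_half_ball {n : ℕ} (G : EuclideanSpace ℝ (Fin n) → ℝ)
    (x : EuclideanSpace ℝ (Fin n)) :
    ∫ y in Metric.ball (0 : EuclideanSpace ℝ (Fin n)) 1, G (x + (1 / 2 : ℝ) • y) =
      2 ^ n * ∫ z in Metric.ball x (1 / 2), G z := by
  rw [← integral_indicator measurableSet_ball,
    ← integral_indicator measurableSet_ball,
    ← integral_add_left_eq_self ((Metric.ball x (1 / 2)).indicator G) x]
  have h := Measure.integral_comp_smul (volume : Measure (EuclideanSpace ℝ (Fin n)))
    (fun y => (Metric.ball x (1 / 2)).indicator G (x + y)) (1 / 2)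
  simp only [finrank_euclideanSpace, Fintype.card_fin, smul_eq_mul] at h
  rw [show |((1 / 2 : ℝ) ^ n)⁻¹| = 2 ^ n by
    rw [abs_of_pos (by positivity)]; simp] at h
  rw [← h]
  congr 1
  ext y
  have hiff : x + (1 / 2 : ℝ) • y ∈ Metric.ball x (1 / 2) ↔
      y ∈ Metric.ball (0 : EuclideanSpace ℝ (Fin n)) 1 := by
    rw [mem_ball_iff_norm, mem_ball_zero_iff, add_sub_cancel_left, norm_smul,
      Real.norm_of_nonneg (by norm_num)]
    constructor <;> intro h <;> linarith
  by_cases hy : y ∈ Metric.ball (0 : EuclideanSpace ℝ (Fin n)) 1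
  · rw [Set.indicator_of_mem hy, Set.indicator_of_mem (hiff.2 hy)]
  · rw [Set.indicator_of_notMem hy, Set.indicator_of_notMem (fun h => hy (hiff.1 h))]

/-! ### Localization and the energy density bound -/

theorem exists_global_extension {n Q : ℕ} {v : EuclideanSpace ℝ (Fin n) → (Fin Q → ℝ)}
    (hv : ContDiffOn ℝ 2 v (Metric.ball 0 1)) {R : ℝ} (hR0 : 0 < R) (hR : R < 1) :
    ∃ V : EuclideanSpace ℝ (Fin n) → (Fin Q → ℝ), ContDiff ℝ 2 V ∧
      Set.EqOn V v (Metric.ball 0 R) := by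
  let χ : ContDiffBump (0 : EuclideanSpace ℝ (Fin n)) := ⟨R, (R + 1) / 2, hR0, by linarith⟩
  refine ⟨fun x => χ x • v x, contDiff_iff_contDiffAt.2 fun x => ?_, fun x hx => ?_⟩
  · by_cases hx : x ∈ Metric.ball (0 : EuclideanSpace ℝ (Fin n)) 1
    · exact χ.contDiffAt.smul (hv.contDiffAt (Metric.isOpen_ball.mem_nhds hx))
    · have hx' : x ∉ tsupport χ := by
        rw [χ.tsupport_eq, mem_closedBall_zero_iff, not_le]
        rw [mem_ball_zero_iff, not_lt] at hx
        exact lt_of_lt_of_le (by change (R + 1) / 2 < 1; linarith) hx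
      refine (contDiffAt_const (c := 0)).congr_of_eventuallyEq ?_
      filter_upwards [notMem_tsupport_iff_eventuallyEq.1 hx'] with y hy
      simp [hy]
  · simp [χ.one_of_mem_closedBall (Metric.ball_subset_closedBall hx)]

/-- Pointwise bound of the energy density on `B_{1/2}` by the total energy on `B₁`. The total energy
may be infinite. -/
theorem energy_density_le {n Q : ℕ} {v : EuclideanSpace ℝ (Fin n) → (Fin Q → ℝ)}
    (hv : ContDiffOn ℝ 2 v (Metric.ball 0 1))
    (hharm : ∀ α : Fin Q, ∀ x ∈ Metric.ball (0 : EuclideanSpace ℝ (Fin n)) 1,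
      (∑ l : Fin n,
        fderiv ℝ (fun z => fderiv ℝ v z (EuclideanSpace.single l (1 : ℝ)) α) x
          (EuclideanSpace.single l (1 : ℝ))) = 0)
    {x : EuclideanSpace ℝ (Fin n)} (hx : ‖x‖ < 1 / 2) :
    volume (Metric.ball (0 : EuclideanSpace ℝ (Fin n)) 1) *
      ENNReal.ofReal (∑ l : Fin n, ∑ α : Fin Q,
              (fderiv ℝ v x (EuclideanSpace.single l (1 : ℝ)) α) ^ 2) ≤
      2 ^ n * ∫⁻ x in Metric.ball (0 : EuclideanSpace ℝ (Fin n)) 1,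
              ENNReal.ofReal (∑ l : Fin n, ∑ α : Fin Q,
                (fderiv ℝ v x (EuclideanSpace.single l (1 : ℝ)) α) ^ 2) := by
  obtain ⟨R, hR1, hR2⟩ := exists_between (show ‖x‖ + 1 / 2 < 1 by linarith)
  have hR0 : 0 < R := by linarith [norm_nonneg x]
  obtain ⟨V, hV, hVv⟩ := exists_global_extension hv hR0 hR2
  have hVα : ∀ α, ContDiff ℝ 2 fun z => V z α := fun α => contDiff_pi.1 hV α
  have hd : ∀ z ∈ Metric.ball (0 : EuclideanSpace ℝ (Fin n)) R, ∀ α e,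
      fderiv ℝ (fun z => V z α) z e = fderiv ℝ v z e α := fun z hz α e => by
    rw [← (hVv.eventuallyEq_of_mem (Metric.isOpen_ball.mem_nhds hz)).fderiv_eq,
      fderiv_apply (hV.differentiable two_ne_zero z)]
    rfl
  have hharm' : ∀ α, ∀ z ∈ Metric.ball (0 : EuclideanSpace ℝ (Fin n)) R,
      (∑ l : Fin n, fderiv ℝ (fun z => fderiv ℝ (fun z => V z α) z
        (EuclideanSpace.single l (1 : ℝ))) z (EuclideanSpace.single l (1 : ℝ))) = 0 := by
    intro α z hz
    rw [← hharm α z (Metric.ball_subset_ball hR2.le hz)]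
    refine Finset.sum_congr rfl fun l _ => ?_
    congr 1
    refine Filter.EventuallyEq.fderiv_eq ?_
    filter_upwards [Metric.isOpen_ball.mem_nhds hz] with y hy
    exact hd y hy α _
  have hV' : ∀ α, Continuous (fderiv ℝ fun z => V z α) := fun α =>
    (hVα α).continuous_fderiv two_ne_zero
  have main := ball_sq_mean_value (U := fun α z => V z α) hVα hharm' (r := 1 / 2)
    (by norm_num) hR1
  rw [setIntegral_half_ball (fun z => ∑ l : Fin n, ∑ α : Fin Q,
          (fderiv ℝ (fun z => V z α) z (EuclideanSpace.single l (1 : ℝ))) ^ 2)] at main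
  have hxR : x ∈ Metric.ball (0 : EuclideanSpace ℝ (Fin n)) R := by
    rw [mem_ball_zero_iff]; linarith
  have hsub : Metric.ball x (1 / 2) ⊆ Metric.ball (0 : EuclideanSpace ℝ (Fin n)) R :=
    Metric.ball_subset_ball' (by rw [dist_zero_right]; linarith)
  have hGcont : Continuous fun z => ∑ l : Fin n, ∑ α : Fin Q,
      (fderiv ℝ (fun z => V z α) z (EuclideanSpace.single l (1 : ℝ))) ^ 2 :=
    continuous_finsetSum _ fun l _ => continuous_finsetSum _ fun α _ =>
      ((hV' α).clm_apply continuous_const).pow 2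
  have hGint : IntegrableOn (fun z => ∑ l : Fin n, ∑ α : Fin Q,
      (fderiv ℝ (fun z => V z α) z (EuclideanSpace.single l (1 : ℝ))) ^ 2)
      (Metric.ball x (1 / 2)) :=
    (hGcont.continuousOn.integrableOn_compact (isCompact_closedBall x (1 / 2))).mono_set
      Metric.ball_subset_closedBall
  have main' := ENNReal.ofReal_le_ofReal main
  rw [ENNReal.ofReal_mul measureReal_nonneg, ENNReal.ofReal_mul (by positivity),
    ofReal_measureReal measure_ball_lt_top.ne,
    ofReal_integral_eq_lintegral_ofReal hGint
      (Filter.Eventually.of_forall fun z => by simp only [Pi.zero_apply]; positivity),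
    ENNReal.ofReal_pow zero_le_two, ENNReal.ofReal_ofNat] at main'
  simp only [hd x hxR] at main'
  refine main'.trans (mul_le_mul' le_rfl ?_)
  rw [setLIntegral_congr_fun (g := fun z => ENNReal.ofReal (∑ l : Fin n, ∑ α : Fin Q,
    (fderiv ℝ v z (EuclideanSpace.single l (1 : ℝ)) α) ^ 2)) measurableSet_ball
    fun z hz => by simp only [hd z (hsub hz)]]
  exact lintegral_mono_set (hsub.trans (Metric.ball_subset_ball hR2.le))

/-- decay estimate for harmonic maps: if `v : B₁(0) ⊆ ℝⁿ → ℝ^Q` is `C²` with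
harmonic components, then for `τ ∈ (0, 1/2]`,
`τ^{2−n} ∫_{B_τ} ‖dv‖² ≤ 2ⁿ τ² ∫_{B₁} ‖dv‖²`. -/
theorem stmt16 (n Q : ℕ)
    (v : EuclideanSpace ℝ (Fin n) → (Fin Q → ℝ))
    (hv : ContDiffOn ℝ 2 v (Metric.ball 0 1))
    (hharm : ∀ α : Fin Q, ∀ x ∈ Metric.ball (0 : EuclideanSpace ℝ (Fin n)) 1,
      (∑ l : Fin n,
        fderiv ℝ (fun z => fderiv ℝ v z (EuclideanSpace.single l (1 : ℝ)) α) x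
          (EuclideanSpace.single l (1 : ℝ))) = 0) :
    ∀ τ : ℝ, 0 < τ → τ ≤ 1 / 2 →
      ENNReal.ofReal (τ ^ ((2 : ℝ) - n)) *
          (∫⁻ x in Metric.ball (0 : EuclideanSpace ℝ (Fin n)) τ,
            ENNReal.ofReal (∑ l : Fin n, ∑ α : Fin Q,
              (fderiv ℝ v x (EuclideanSpace.single l (1 : ℝ)) α) ^ 2))
        ≤ (2 : ℝ≥0∞) ^ n * ENNReal.ofReal (τ ^ 2) *
            ∫⁻ x in Metric.ball (0 : EuclideanSpace ℝ (Fin n)) 1,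
              ENNReal.ofReal (∑ l : Fin n, ∑ α : Fin Q,
                (fderiv ℝ v x (EuclideanSpace.single l (1 : ℝ)) α) ^ 2) := by
  intro τ hτ hτ2
  set I := ∫⁻ x in Metric.ball (0 : EuclideanSpace ℝ (Fin n)) 1,
    ENNReal.ofReal (∑ l : Fin n, ∑ α : Fin Q,
      (fderiv ℝ v x (EuclideanSpace.single l (1 : ℝ)) α) ^ 2) with hI
  set B := volume (Metric.ball (0 : EuclideanSpace ℝ (Fin n)) 1) with hB
  have hB0 : B ≠ 0 := (Metric.measure_ball_pos _ _ one_pos).ne'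
  have hBt : B ≠ ∞ := measure_ball_lt_top.ne
  have hvol : volume (Metric.ball (0 : EuclideanSpace ℝ (Fin n)) τ) =
      ENNReal.ofReal (τ ^ n) * B := by
    rw [Measure.addHaar_ball_of_pos _ _ hτ, finrank_euclideanSpace, Fintype.card_fin]
  have hτn : ENNReal.ofReal (τ ^ ((2 : ℝ) - n)) * ENNReal.ofReal (τ ^ n) =
      ENNReal.ofReal (τ ^ 2) := by
    rw [← ENNReal.ofReal_mul (by positivity)]
    congr 1
    rw [← Real.rpow_natCast τ n, ← Real.rpow_add hτ, sub_add_cancel]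
    exact_mod_cast Real.rpow_natCast τ 2
  calc _ ≤ ENNReal.ofReal (τ ^ ((2 : ℝ) - n)) *
        ∫⁻ _ in Metric.ball (0 : EuclideanSpace ℝ (Fin n)) τ, B⁻¹ * (2 ^ n * I) := by
        refine mul_le_mul' le_rfl (setLIntegral_mono' measurableSet_ball fun x hx => ?_)
        rw [mem_ball_zero_iff] at hx
        have h := energy_density_le hv hharm (lt_of_lt_of_le hx hτ2)
        rw [mul_comm, ← div_eq_mul_inv, ENNReal.le_div_iff_mul_le (Or.inl hB0) (Or.inl hBt), mul_comm]
        exact h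
    _ = (ENNReal.ofReal (τ ^ ((2 : ℝ) - n)) * ENNReal.ofReal (τ ^ n)) * (2 ^ n * I) *
        (B⁻¹ * B) := by
        rw [setLIntegral_const, hvol]
        ring
    _ = 2 ^ n * ENNReal.ofReal (τ ^ 2) * I := by
        rw [hτn, ENNReal.inv_mul_cancel hB0 hBt]
        ring
end
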